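/- Let A be a ring and let R = A((x)) be its Laurent series ring. If R is a right semidistributive semilocal ring, then both R and A are right Artinian rings. -/

import Mathlib

/-- A module is *distributive* if its lattice of submodules is distributive, i.e.
`X ⊓ (Y ⊔ Z) = (X ⊓ Y) ⊔ (X ⊓ Z)` for all submodules `X, Y, Z`. -/
def IsDistribModule (R M : Type*) [Ring R] [AddCommGroup M] [Module R M] : Prop :=
  ∀ X Y Z : Submodule R M, X ⊓ (Y ⊔ Z) = X ⊓ Y ⊔ X ⊓ Z

/-- A ring `A` is *right semidistributive* if, as a right module over itself
(i.e. as an `Aᵐᵒᵖ`-module), it is a direct sum of distributive submodules. -/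
def IsRightSemidistributiveRing (A : Type*) [Ring A] : Prop :=
  ∃ (ι : Type) (N : ι → Submodule Aᵐᵒᵖ A),
    iSupIndep N ∧ iSup N = ⊤ ∧ ∀ i, IsDistribModule Aᵐᵒᵖ (N i)

/-- A ring `R` is *semilocal* if `R` modulo its Jacobson radical is a semisimple ring. -/
def IsSemilocalRing (R : Type*) [Ring R] : Prop :=
  IsSemisimpleModule R (R ⧸ Ideal.jacobson (⊥ : Ideal R))

/-!
Let `R = A((x))`. Differences of distinct powers of `x` are central units, so, `R` being semilocal,
some `a - xⁿ` is a unit for every `a : A`; the coefficients of its inverse show that `A` is strongly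
`π`-regular. Hence `J(A)` is nil, which gives `J(A)((x)) ⊆ J(R)`, and `1` is a sum of local
idempotents of `A`, which remain local in `R`. Semidistributivity makes divisibility total on `pRq`
for local `p` and `q`. Comparing two series with interlaced sparse supports shows that `pAq` has no
infinite chain of proper divisors, so `pAq` has a least element `c` for divisibility, and
`J(A) ∩ qAq` a least element `w`. As `w` is nilpotent, every element of `pRq` is associated to one
of the finitely many `c wⁱ`, so that `pR` and `pA` have finitely many right submodules.
-/

section Jacobson

variable {R : Type*} [Ring R]

theorem isUnit_of_sub_one_mem_jacobson {r : R} (h : r - 1 ∈ Ring.jacobson R) : IsUnit r := by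
  have exists_left_inv (s : R) (hs : s - 1 ∈ Ring.jacobson R) : ∃ t, t * s = 1 := by
    rw [← Ideal.jacobson_bot] at hs
    obtain ⟨t, ht⟩ := Ideal.exists_mul_sub_mem_of_sub_one_mem_jacobson s hs
    exact ⟨t, sub_eq_zero.1 ht⟩
  obtain ⟨s, hs⟩ := exists_left_inv r h
  have hs' : s - 1 = -(s * (r - 1)) := by rw [mul_sub, hs]; noncomm_ring
  obtain ⟨t, ht⟩ := exists_left_inv s (hs' ▸ neg_mem (Ideal.mul_mem_left _ s h))
  exact ⟨⟨r, s, left_inv_eq_right_inv ht hs ▸ ht, hs⟩, rfl⟩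

instance isLocalHom_quotient_jacobson :
    IsLocalHom (Ideal.Quotient.mk (Ring.jacobson R)) where
  map_nonunit r := by
    rintro ⟨⟨u, v, huv, hvu⟩, rfl : u = _⟩
    obtain ⟨s, rfl⟩ := Ideal.Quotient.mk_surjective v
    have isUnit_of_mk_eq_one (t : R) (ht : Ideal.Quotient.mk (Ring.jacobson R) t = 1) :
        IsUnit t :=
      isUnit_of_sub_one_mem_jacobson (Ideal.Quotient.eq.1 (ht.trans (map_one _).symm))
    obtain ⟨a, ha⟩ := (isUnit_of_mk_eq_one (r * s) ((map_mul _ r s).trans huv)).exists_right_inv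
    obtain ⟨b, hb⟩ := (isUnit_of_mk_eq_one (s * r) ((map_mul _ s r).trans hvu)).exists_left_inv
    exact isUnit_iff_exists_and_exists.2
      ⟨⟨s * a, by rw [← mul_assoc, ha]⟩, ⟨b * s, by rw [mul_assoc, hb]⟩⟩

theorem idempotent_eq_zero_of_mem_jacobson {e : R} (he : IsIdempotentElem e)
    (hJ : e ∈ Ring.jacobson R) : e = 0 := by
  have hunit : IsUnit (1 - e) :=
    isUnit_of_sub_one_mem_jacobson (by simpa using hJ)
  exact hunit.mul_left_eq_zero.1 he.mul_one_sub_self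

theorem IsSemilocalRing.isSemisimpleRing (h : IsSemilocalRing R) :
    IsSemisimpleRing (R ⧸ Ring.jacobson R) := by
  unfold IsSemilocalRing at h
  rw [Ideal.jacobson_bot] at h
  have : RingHomSurjective (Ideal.Quotient.mk (Ring.jacobson R)) :=
    ⟨Ideal.Quotient.mk_surjective⟩
  let l : (R ⧸ Ring.jacobson R) →ₛₗ[Ideal.Quotient.mk (Ring.jacobson R)] (R ⧸ Ring.jacobson R) :=
    { toFun := id
      map_add' := fun _ _ ↦ rfl
      map_smul' := fun _ x ↦ x.inductionOn' fun _ ↦ rfl }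
  exact (LinearMap.isSemisimpleModule_iff_of_bijective l Function.bijective_id).1 h

end Jacobson

section Spectrum

variable {Q : Type*} [Ring Q] [IsArtinianRing Q]

theorem isUnit_of_forall_mul_eq_zero {g : Q} (h : ∀ w, w * g = 0 → w = 0) : IsUnit g := by
  have hinj : Function.Injective (LinearMap.toSpanSingleton Q Q g) :=
    (injective_iff_map_eq_zero _).2 h
  obtain ⟨y, hy⟩ := IsArtinian.surjective_of_injective_endomorphism _ hinj 1
  exact IsUnit.of_mul_eq_one_right y hy

theorem exists_isUnit_sub_algebraMap {Z : Type*} [CommRing Z] [Algebra Z Q] (t : ℕ → Z)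
    (ht : ∀ i j, i < j → IsUnit (algebraMap Z Q (t j - t i))) (a : Q) :
    ∃ n, IsUnit (a - algebraMap Z Q (t n)) := by
  let P (m : ℕ) : Polynomial Z := ∏ k ∈ Finset.range m, (.X - .C (t k))
  have P_succ (m : ℕ) : P (m + 1) = P m * (.X - .C (t m)) := Finset.prod_range_succ _ m
  let K : ℕ →o Submodule Q Q :=
    { toFun := fun m ↦ LinearMap.ker (LinearMap.toSpanSingleton Q Q (Polynomial.aeval a (P m)))
      monotone' := monotone_nat_of_le_succ fun m w (hw : w * _ = 0) ↦ by
        simp [P_succ, ← mul_assoc, hw] }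
  obtain ⟨m, hm⟩ := monotone_stabilizes_iff_noetherian.2 (inferInstance : IsNoetherian Q Q) K
  refine ⟨m, isUnit_of_forall_mul_eq_zero fun w hw ↦ ?_⟩
  have hwK : w ∈ K m := by
    rw [hm (m + 1) m.le_succ]
    change w * _ = 0
    rw [P_succ, mul_comm, map_mul, ← mul_assoc]
    simp [hw]
  have hw_aeval : w * Polynomial.aeval a (P m) = w * algebraMap Z Q ((P m).eval (t m)) := by
    obtain ⟨q, hq⟩ := Polynomial.X_sub_C_dvd_sub_C_eval (a := t m) (p := P m)
    rw [eq_add_of_sub_eq' hq, map_add, map_mul, mul_add, ← mul_assoc w]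
    simp [hw]
  have hunit : IsUnit (algebraMap Z Q ((P m).eval (t m))) := by
    rw [Polynomial.eval_prod]
    refine Finset.prod_induction _ (fun z ↦ IsUnit (algebraMap Z Q z))
      (fun x y hx hy ↦ by simpa using hx.mul hy) (by simp) fun k hk ↦ ?_
    simpa using ht k m (Finset.mem_range.1 hk)
  exact hunit.mul_left_eq_zero.1 (hw_aeval.symm.trans hwK)

end Spectrum

section LaurentSeries

variable {A : Type*} [Ring A]

theorem laurent_coeff_C_mul (a : A) (f : LaurentSeries A) (k : ℤ) :
    (HahnSeries.C a * f).coeff k = a * f.coeff k := by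
  rw [HahnSeries.C_apply, HahnSeries.coeff_single_zero_mul]

theorem laurent_coeff_mul_C (a : A) (f : LaurentSeries A) (k : ℤ) :
    (f * HahnSeries.C a).coeff k = f.coeff k * a := by
  rw [HahnSeries.C_apply, HahnSeries.coeff_mul_single_zero]

theorem laurent_coeff_C (a : A) (k : ℤ) :
    (HahnSeries.C a : LaurentSeries A).coeff k = if k = 0 then a else 0 := by
  rw [HahnSeries.C_apply, HahnSeries.coeff_single]
  congr

theorem commute_single_one (n : ℤ) (f : LaurentSeries A) : Commute (HahnSeries.single n 1) f := by
  ext k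
  rw [HahnSeries.coeff_single_mul, HahnSeries.coeff_mul_single, one_mul, mul_one]

theorem exists_powerSeries_eq {f : LaurentSeries A} (hf : ∀ k < 0, f.coeff k = 0) :
    ∃ g : PowerSeries A, HahnSeries.ofPowerSeries ℤ A g = f := by
  refine ⟨PowerSeries.mk fun n ↦ f.coeff n, ?_⟩
  ext k
  rw [PowerSeries.coeff_coe, PowerSeries.coeff_mk]
  split_ifs with hk
  · exact (hf k hk).symm
  · rw [Int.natAbs_of_nonneg (not_lt.1 hk)]

theorem isUnit_of_isUnit_coeff_zero {f : LaurentSeries A} (hneg : ∀ k < 0, f.coeff k = 0)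
    (h0 : IsUnit (f.coeff 0)) : IsUnit f := by
  obtain ⟨g, rfl⟩ := exists_powerSeries_eq hneg
  have hg : IsUnit g := by
    rw [PowerSeries.isUnit_iff_constantCoeff, ← PowerSeries.coeff_zero_eq_constantCoeff_apply]
    simpa [PowerSeries.coeff_coe] using h0
  exact hg.map _

theorem isUnit_single_one_sub_single_one {m n : ℤ} (h : m < n) :
    IsUnit (HahnSeries.single n 1 - HahnSeries.single m 1 : LaurentSeries A) := by
  have hfactor : (HahnSeries.single n 1 - HahnSeries.single m 1 : LaurentSeries A) =
      HahnSeries.single m 1 * (HahnSeries.single (n - m) 1 - HahnSeries.single 0 1) := by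
    simp [mul_sub]
  rw [hfactor]
  refine IsUnit.mul ?_ (isUnit_of_isUnit_coeff_zero (fun k hk ↦ ?_) ?_)
  · exact isUnit_iff_exists.2 ⟨HahnSeries.single (-m) 1, by simp, by simp⟩
  · rw [HahnSeries.coeff_sub, HahnSeries.coeff_single_of_ne (by lia),
      HahnSeries.coeff_single_of_ne hk.ne, sub_zero]
  · rw [HahnSeries.coeff_sub, HahnSeries.coeff_single_of_ne (by lia),
      HahnSeries.coeff_single_same, zero_sub]
    exact isUnit_one.neg

end LaurentSeries

section PiRegular

/-- A ring is strongly `π`-regular if every descending chain `aR ⊇ a²R ⊇ ⋯` stabilises. The element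
witnessing this is asked to commute with `a`, so the condition is left-right symmetric. -/
def IsStronglyPiRegular (R : Type*) [Ring R] : Prop :=
  ∀ a : R, ∃ (k : ℕ) (c : R), Commute a c ∧ a ^ k = a ^ (k + 1) * c

theorem exists_pow_eq_of_isUnit_C_sub_single {A : Type*} [Ring A] {a : A} {n : ℤ} (hn : 0 < n)
    (h : IsUnit (HahnSeries.C a - HahnSeries.single n 1 : LaurentSeries A)) :
    ∃ (k : ℕ) (c : A), Commute a c ∧ a ^ k = a ^ (k + 1) * c := by
  obtain ⟨u, hu⟩ := h
  set b : LaurentSeries A := ↑u⁻¹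
  have hcomm : Commute (HahnSeries.C a) b :=
    Commute.units_inv_right <| hu ▸ (Commute.refl _).sub_right (commute_single_one n _).symm
  have hcomm_coeff : a * b.coeff 0 = b.coeff 0 * a := by
    simpa only [laurent_coeff_C_mul, laurent_coeff_mul_C] using congr(HahnSeries.coeff $hcomm.eq 0)
  have hrec (i : ℤ) : a * b.coeff i = b.coeff (i - n) + (1 : LaurentSeries A).coeff i := by
    have := congr(HahnSeries.coeff $(u.mul_inv) i)
    rw [hu, sub_mul, HahnSeries.coeff_sub, laurent_coeff_C_mul, HahnSeries.coeff_single_mul,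
      one_mul] at this
    exact sub_eq_iff_eq_add'.1 this
  have hpow (m : ℕ) : a ^ (m + 1) * b.coeff 0 = a ^ m + b.coeff (-((m + 1) * n)) := by
    induction m with
    | zero => simpa [add_comm] using hrec 0
    | succ m ih =>
      have hne : -((m + 1) * n) ≠ 0 := neg_ne_zero.2 (mul_pos (by positivity) hn).ne'
      rw [pow_succ', mul_assoc, ih, mul_add, ← pow_succ', hrec, HahnSeries.coeff_one, if_neg hne,
        add_zero]
      congr 2
      push_cast
      ring
  obtain ⟨m, hm⟩ : ∃ m : ℕ, -((m + 1) * n) < b.order := by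
    refine ⟨b.order.natAbs, ?_⟩
    have : ((b.order.natAbs : ℤ) + 1) * 1 ≤ (b.order.natAbs + 1) * n := by gcongr; exact hn
    lia
  exact ⟨m, b.coeff 0, hcomm_coeff,
    by rw [hpow, HahnSeries.coeff_eq_zero_of_lt_order hm, add_zero]⟩

theorem IsSemilocalRing.isStronglyPiRegular {A : Type*} [Ring A]
    (h : IsSemilocalRing (LaurentSeries A)) : IsStronglyPiRegular A := by
  intro a
  have := h.isSemisimpleRing
  let π := Ideal.Quotient.mk (Ring.jacobson (LaurentSeries A))
  have single_mem_center (n : ℤ) : π (HahnSeries.single n 1) ∈ Subring.center _ := by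
    rw [Subring.mem_center_iff, Ideal.Quotient.mk_surjective.forall]
    exact fun f ↦ ((commute_single_one n f).map π).eq.symm
  let t (n : ℕ) : Subring.center _ := ⟨_, single_mem_center (n + 1)⟩
  have isUnit_sub (i j : ℕ) (hij : i < j) :
      IsUnit (algebraMap _ (LaurentSeries A ⧸ Ring.jacobson (LaurentSeries A)) (t j - t i)) := by
    change IsUnit (π _ - π _)
    rw [← map_sub]
    exact (isUnit_single_one_sub_single_one (by lia)).map π
  obtain ⟨n, hn⟩ := exists_isUnit_sub_algebraMap t isUnit_sub (π (HahnSeries.C a))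
  exact exists_pow_eq_of_isUnit_C_sub_single (by positivity)
    (isUnit_of_map_unit π _ ((map_sub π _ _).symm ▸ hn))

variable {R : Type*} [Ring R]

theorem IsStronglyPiRegular.isNilpotent_of_mem_jacobson (h : IsStronglyPiRegular R) {a : R}
    (ha : a ∈ Ring.jacobson R) : IsNilpotent a := by
  obtain ⟨k, c, -, hc⟩ := h a
  refine ⟨k, (isUnit_of_sub_one_mem_jacobson (r := 1 - a * c) ?_).mul_left_eq_zero.1 ?_⟩
  · rw [sub_sub_cancel_left]
    exact neg_mem (Ideal.mul_mem_right c _ ha)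
  · rw [mul_sub, ← mul_assoc, ← pow_succ, mul_one, ← hc, sub_self]

theorem IsStronglyPiRegular.exists_isIdempotentElem_pow_mul (h : IsStronglyPiRegular R) (a : R) :
    ∃ (k : ℕ) (c : R), Commute (a ^ k) c ∧ IsIdempotentElem (a ^ k * c) ∧
      a ^ k * (a ^ k * c) = a ^ k ∧ 0 < k := by
  obtain ⟨k, c, hac, hc⟩ := h a
  have hpow (j : ℕ) : a ^ (k + 1 + j) * c ^ j = a ^ (k + 1) := by
    induction j with
    | zero => simp
    | succ j ih =>
      calc a ^ (k + 1 + (j + 1)) * c ^ (j + 1)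
          = a ^ (j + 1) * (a ^ (k + 1) * c) * c ^ j := by
            rw [← mul_assoc, ← pow_add, pow_succ' c, mul_assoc _ c]; congr 2; ring
        _ = a ^ (k + 1) := by rw [← hc, ← pow_add, ← ih]; congr 2; ring
  have hmul : a ^ (k + 1) * (a ^ (k + 1) * c ^ (k + 1)) = a ^ (k + 1) := by
    rw [← mul_assoc, ← pow_add, hpow]
  have hcomm : Commute (a ^ (k + 1)) (c ^ (k + 1)) := hac.pow_pow _ _
  refine ⟨k + 1, c ^ (k + 1), hcomm, ?_, hmul, k.succ_pos⟩
  calc a ^ (k + 1) * c ^ (k + 1) * (a ^ (k + 1) * c ^ (k + 1))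
      = c ^ (k + 1) * (a ^ (k + 1) * (a ^ (k + 1) * c ^ (k + 1))) := by
        rw [hcomm.eq]; simp only [mul_assoc]
    _ = a ^ (k + 1) * c ^ (k + 1) := by rw [hmul, hcomm.eq]

end PiRegular

section Levitzki

variable {R M : Type*} [Ring R] [AddCommGroup M] [Module R M]

theorem apply_eq_zero_of_isNilpotent_mul {a b : Module.End R M} {U : Submodule R M}
    (hab : IsNilpotent (a * b)) (hU : U ≤ U.comap (b * a))
    (h : ∀ u ∈ U, a (b (a u)) = 0 → a u = 0) : ∀ u ∈ U, a u = 0 := by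
  have of_pow (n : ℕ) : ∀ u ∈ U, ((a * b) ^ n) (a u) = 0 → a u = 0 := by
    induction n with
    | zero => exact fun _ _ hau ↦ hau
    | succ n ih => exact fun u hu hn ↦ h u hu (ih (b (a u)) (hU hu) (by rwa [pow_succ] at hn))
  obtain ⟨n, hn⟩ := hab
  exact fun u hu ↦ of_pow n u hu (by rw [hn, LinearMap.zero_apply])

theorem exists_apply_ne_zero_and_forall_apply_apply_eq_zero [IsNoetherian R M]
    {S : Subsemigroup (Module.End R M)} (hS : ∀ s ∈ S, IsNilpotent s) {V : Submodule R M}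
    (hSV : ∀ s ∈ S, V ≤ V.comap s) (hne : ∃ s ∈ S, ∃ v ∈ V, s v ≠ 0) :
    ∃ a ∈ S, (∃ v ∈ V, a v ≠ 0) ∧ ∀ u ∈ V, a (a u) = 0 ∧ ∀ b ∈ S, a (b (a u)) = 0 := by
  obtain ⟨a, ⟨ha, v, hv, hav⟩, hamax⟩ := WellFounded.has_min
    (InvImage.wf (fun s : Module.End R M ↦ LinearMap.ker s ⊓ V) wellFounded_gt)
    {s | s ∈ S ∧ ∃ v ∈ V, s v ≠ 0} hne
  have hkill (b : Module.End R M) (hab : a * b ∈ S) (hba : b * a ∈ S) (u : M) (hu : u ∈ V) :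
      a (b (a u)) = 0 := by
    by_contra habau
    have hle : LinearMap.ker a ⊓ V ≤ LinearMap.ker (a * b * a) ⊓ V :=
      inf_le_inf_right V fun w hw ↦ by simp [LinearMap.mem_ker.1 hw]
    have hker := eq_of_le_of_not_lt hle (hamax _ ⟨S.mul_mem hab ha, u, hu, habau⟩)
    refine hav (apply_eq_zero_of_isNilpotent_mul (hS _ hab) (hSV _ hba) (fun w hw hw0 ↦ ?_) v hv)
    exact (hker.ge (⟨hw0, hw⟩ : w ∈ LinearMap.ker (a * b * a) ⊓ V)).1
  refine ⟨a, ha, ⟨v, hv, hav⟩, fun u hu ↦ ⟨?_, fun b hb ↦ ?_⟩⟩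
  · exact hkill 1 (by rwa [mul_one]) (by rwa [one_mul]) u hu
  · exact hkill b (S.mul_mem ha hb) (S.mul_mem hb ha) u hu

-- If `S` did not kill a minimal invariant submodule `V`, the vectors `w` of `V` with `a w = 0` and
-- `a S w = 0` would form a smaller one, containing some `a v ≠ 0`.
theorem exists_mem_apply_eq_zero_of_isNilpotent [IsNoetherian R M] [IsArtinian R M]
    {S : Subsemigroup (Module.End R M)} (hS : ∀ s ∈ S, IsNilpotent s) {U : Submodule R M}
    (hU : U ≠ ⊥) (hSU : ∀ s ∈ S, U ≤ U.comap s) : ∃ w ∈ U, w ≠ 0 ∧ ∀ s ∈ S, s w = 0 := by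
  obtain ⟨V, ⟨hVU, hV, hSV⟩, hVmin⟩ := WellFounded.has_min (wellFounded_lt (α := Submodule R M))
    {V | V ≤ U ∧ V ≠ ⊥ ∧ ∀ s ∈ S, V ≤ V.comap s} ⟨U, le_rfl, hU, hSU⟩
  suffices hzero : ∀ s ∈ S, ∀ v ∈ V, s v = 0 by
    obtain ⟨w, hw, hw0⟩ := V.ne_bot_iff.1 hV
    exact ⟨w, hVU hw, hw0, fun s hs ↦ hzero s hs w hw⟩
  by_contra! hne
  obtain ⟨a, ha, ⟨v, hv, hav⟩, hkill⟩ :=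
    exists_apply_ne_zero_and_forall_apply_apply_eq_zero hS hSV hne
  let W : Submodule R M := V ⊓ (LinearMap.ker a ⊓ ⨅ b ∈ S, LinearMap.ker (a * b))
  have mem_W {w : M} : w ∈ W ↔ w ∈ V ∧ a w = 0 ∧ ∀ b ∈ S, a (b w) = 0 := by
    simp [W, Submodule.mem_iInf]
  have hW : W ≠ ⊥ := W.ne_bot_iff.2 ⟨a v, mem_W.2 ⟨hSV a ha hv, hkill v hv⟩, hav⟩
  have hSW (s) (hs : s ∈ S) : W ≤ W.comap s := fun w hw ↦ by
    obtain ⟨hwV, -, hw⟩ := mem_W.1 hw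
    exact mem_W.2 ⟨hSV s hs hwV, hw s hs, fun b hb ↦ hw (b * s) (S.mul_mem hb hs)⟩
  have hWV : W < V := lt_of_le_of_ne inf_le_left fun hWV ↦ hav (mem_W.1 (hWV ▸ hv)).2.1
  exact hVmin W ⟨hWV.le.trans hVU, hW, hSW⟩ hWV

theorem exists_mem_mul_eq_zero_of_isNilpotent [IsArtinianRing R] {S : Subsemigroup R}
    (hS : ∀ s ∈ S, IsNilpotent s) {I : Ideal R} (hI : I ≠ ⊥) (hIS : ∀ s ∈ S, ∀ u ∈ I, u * s ∈ I) :
    ∃ w ∈ I, w ≠ 0 ∧ ∀ s ∈ S, w * s = 0 := by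
  let S' : Subsemigroup (Module.End R R) :=
    { carrier := LinearMap.mulRight R '' S
      mul_mem' := by
        rintro _ _ ⟨s, hs, rfl⟩ ⟨t, ht, rfl⟩
        exact ⟨t * s, S.mul_mem ht hs, LinearMap.mulRight_mul _ _ t s⟩ }
  have hS' : ∀ f ∈ S', IsNilpotent f := by
    rintro _ ⟨s, hs, rfl⟩
    obtain ⟨n, hn⟩ := hS s hs
    exact ⟨n, by rw [LinearMap.pow_mulRight, hn, LinearMap.mulRight_zero_eq_zero R R]⟩
  obtain ⟨w, hw, hw0, hwS⟩ := exists_mem_apply_eq_zero_of_isNilpotent hS' hI <| by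
    rintro _ ⟨s, hs, rfl⟩ u hu
    exact hIS s hs u hu
  exact ⟨w, hw, hw0, fun s hs ↦ hwS _ ⟨s, hs, rfl⟩⟩

end Levitzki

section LaurentIdeal

variable {A : Type*} [Ring A]

/-- The left ideal `I((x))` of the Laurent series all of whose coefficients lie in `I`. -/
def laurentIdeal (I : Ideal A) : Ideal (LaurentSeries A) where
  carrier := {f | ∀ k, f.coeff k ∈ I}
  add_mem' hf hg k := I.add_mem (hf k) (hg k)
  zero_mem' _ := I.zero_mem
  smul_mem' f g hg k := by
    rw [smul_eq_mul, HahnSeries.coeff_mul]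
    exact I.sum_mem fun ij _ ↦ I.mul_mem_left _ (hg ij.2)

theorem exists_eq_sum_single_add (f : LaurentSeries A) :
    ∃ h : LaurentSeries A, (∀ k ≤ 0, h.coeff k = 0) ∧
      f = ∑ k ∈ Finset.Icc f.order 0, HahnSeries.single k (f.coeff k) + h := by
  refine ⟨f - ∑ k ∈ Finset.Icc f.order 0, HahnSeries.single k (f.coeff k), fun k hk ↦ ?_, by abel⟩
  rw [HahnSeries.coeff_sub, HahnSeries.coeff_sum, sub_eq_zero,
    Finset.sum_eq_single k (fun j _ hj ↦ HahnSeries.coeff_single_of_ne hj.symm),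
    HahnSeries.coeff_single_same]
  intro hkf
  rw [HahnSeries.coeff_single_same, HahnSeries.coeff_eq_zero_of_lt_order (by simpa [hk] using hkf)]

-- Only the part `h` of `g` of positive order acts on `w`, and `1 - h` is a unit.
theorem eq_zero_of_mul_map_C_coeff_eq_zero {Q : Type*} [Ring Q] (φ : LaurentSeries A →+* Q) {w : Q}
    {g : LaurentSeries A} (hfix : w * φ g = w) (hkill : ∀ k, w * φ (HahnSeries.C (g.coeff k)) = 0) :
    w = 0 := by
  obtain ⟨h, hh, hgh⟩ := exists_eq_sum_single_add g
  have hw_single (k : ℤ) : w * φ (HahnSeries.single k (g.coeff k)) = 0 := by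
    have : HahnSeries.single k (g.coeff k) = HahnSeries.C (g.coeff k) * HahnSeries.single k 1 := by
      simp [HahnSeries.C_apply]
    rw [this, map_mul, ← mul_assoc, hkill, zero_mul]
  have hw_h : w * φ h = w := by
    conv_rhs => rw [← hfix, hgh, map_add, map_sum, mul_add, Finset.mul_sum,
      Finset.sum_eq_zero fun k _ ↦ hw_single k, zero_add]
  have hunit : IsUnit (1 - h) := isUnit_of_isUnit_coeff_zero
    (fun k hk ↦ by simp [hh k hk.le, HahnSeries.coeff_one, hk.ne]) (by simp [hh 0 le_rfl])
  rw [← (hunit.map φ).mul_left_eq_zero, map_sub, map_one, mul_sub, hw_h, mul_one, sub_self]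

theorem laurentIdeal_le_jacobson (hR : IsSemilocalRing (LaurentSeries A)) {N : Ideal A}
    [N.IsTwoSided] (hN : ∀ a ∈ N, IsNilpotent a) :
    laurentIdeal N ≤ Ring.jacobson (LaurentSeries A) := by
  have := hR.isSemisimpleRing
  let π := Ideal.Quotient.mk (Ring.jacobson (LaurentSeries A))
  have hπ : Function.Surjective π := Ideal.Quotient.mk_surjective
  let S : Subsemigroup (LaurentSeries A ⧸ Ring.jacobson (LaurentSeries A)) :=
    { carrier := (fun a ↦ π (HahnSeries.C a)) '' N
      mul_mem' := by
        rintro _ _ ⟨a, -, rfl⟩ ⟨b, hb, rfl⟩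
        exact ⟨a * b, N.mul_mem_left a hb, by simp only [map_mul]⟩ }
  suffices h : (laurentIdeal N).map π = ⊥ by
    rwa [Ideal.map_eq_bot_iff_le_ker, Ideal.mk_ker] at h
  by_contra hne
  have isNilpotent_of_mem : ∀ s ∈ S, IsNilpotent s := by
    rintro _ ⟨a, haN, rfl⟩
    exact ((hN a haN).map HahnSeries.C).map π
  have mul_mem : ∀ s ∈ S, ∀ u ∈ (laurentIdeal N).map π, u * s ∈ (laurentIdeal N).map π := by
    rintro _ ⟨a, -, rfl⟩ u hu
    obtain ⟨f, hf, rfl⟩ := (Ideal.mem_map_iff_of_surjective π hπ).1 hu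
    rw [← map_mul]
    exact Ideal.mem_map_of_mem π fun k ↦ laurent_coeff_mul_C a f k ▸ N.mul_mem_right a (hf k)
  obtain ⟨w, hw, hw0, hwS⟩ := exists_mem_mul_eq_zero_of_isNilpotent isNilpotent_of_mem hne mul_mem
  obtain ⟨e, he, hspan⟩ := IsSemisimpleRing.ideal_eq_span_idempotent ((laurentIdeal N).map π)
  obtain ⟨g, hg, rfl⟩ :=
    (Ideal.mem_map_iff_of_surjective π hπ).1 (hspan ▸ Ideal.mem_span_singleton_self e)
  obtain ⟨q, rfl⟩ := Ideal.mem_span_singleton'.1 (hspan ▸ hw)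
  exact hw0 <| eq_zero_of_mul_map_C_coeff_eq_zero π (by rw [mul_assoc, he.eq])
    fun k ↦ hwS _ ⟨_, hg k, rfl⟩

end LaurentIdeal

section Idempotents

variable {R : Type*} [Ring R]

/-- A nonzero idempotent `e` is primitive if the corner `eRe` has no idempotents except `0` and
`e`. -/
structure IsPrimitiveIdempotent (e : R) : Prop where
  isIdempotentElem : IsIdempotentElem e
  ne_zero : e ≠ 0
  eq_zero_or_eq : ∀ g, IsIdempotentElem g → e * g = g → g * e = g → g = 0 ∨ g = e

/-- A nonzero idempotent `e` is local if the corner `eRe` is a local ring: every element of `eRe`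
outside the Jacobson radical of `R` is left invertible in `eRe`, which already makes it
invertible. -/
structure IsLocalIdempotent (e : R) : Prop where
  isIdempotentElem : IsIdempotentElem e
  ne_zero : e ≠ 0
  mem_jacobson_or : ∀ a, e * a * e ∈ Ring.jacobson R ∨ ∃ v, v * (e * a * e) = e

theorem IsLocalIdempotent.corner_dvd {e : R} (he : IsLocalIdempotent e) {a : R}
    (ha : e * a * e ∉ Ring.jacobson R) : e * a * e ∣ e := by
  have hee : e * e = e := he.isIdempotentElem
  obtain ⟨v, hv⟩ := (he.mem_jacobson_or a).resolve_left ha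
  have hv' : e * v * e * (e * a * e) = e := by
    calc e * v * e * (e * a * e) = e * v * (e * e * a * e) := by simp only [mul_assoc]
      _ = e := by rw [hee, mul_assoc, hv, hee]
  have hvJ : e * v * e ∉ Ring.jacobson R := fun hvJ ↦
    he.ne_zero <| idempotent_eq_zero_of_mem_jacobson hee (hv' ▸ Ideal.mul_mem_right _ _ hvJ)
  obtain ⟨u, hu⟩ := (he.mem_jacobson_or v).resolve_left hvJ
  have hue : u * e = e * a * e := by
    calc u * e = u * (e * v * e) * (e * a * e) := by rw [mul_assoc, hv']
      _ = e * (e * a * e) := by rw [hu]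
      _ = e * a * e := by rw [← mul_assoc, ← mul_assoc, hee]
  refine ⟨e * v * e, ?_⟩
  calc e = u * (e * v * e) := hu.symm
    _ = u * (e * e * v * e) := by rw [hee]
    _ = u * e * (e * v * e) := by simp only [mul_assoc]
    _ = e * a * e * (e * v * e) := by rw [hue]

theorem IsPrimitiveIdempotent.isNilpotent_or_exists_mul_eq {p : R} (hp : IsPrimitiveIdempotent p)
    (hR : IsStronglyPiRegular R) {a : R} (hpa : p * a = a) (hap : a * p = a) :
    IsNilpotent a ∨ ∃ v, v * a = p := by
  obtain ⟨k, c, hcomm, hidem, hfix, hk⟩ := hR.exists_isIdempotentElem_pow_mul a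
  obtain ⟨k, rfl⟩ := Nat.exists_eq_add_one.2 hk
  have hleft : p * (a ^ (k + 1) * c) = a ^ (k + 1) * c := by rw [pow_succ']; simp [← mul_assoc, hpa]
  have hright : a ^ (k + 1) * c * p = a ^ (k + 1) * c := by
    rw [hcomm.eq, pow_succ, mul_assoc, mul_assoc, hap]
  obtain h | h := hp.eq_zero_or_eq _ hidem hleft hright
  · exact .inl ⟨k + 1, by rw [← hfix, h, mul_zero]⟩
  · exact .inr ⟨c * a ^ k, by rw [mul_assoc, ← pow_succ, ← hcomm.eq, h]⟩

theorem IsPrimitiveIdempotent.isLocalIdempotent {p : R} (hp : IsPrimitiveIdempotent p)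
    (hR : IsStronglyPiRegular R) : IsLocalIdempotent p := by
  have hpp : p * p = p := hp.isIdempotentElem
  refine ⟨hpp, hp.ne_zero, fun a ↦ or_iff_not_imp_right.2 fun hinv ↦ ?_⟩
  have hbp : p * a * p * p = p * a * p := by rw [mul_assoc, hpp]
  generalize p * a * p = b at hinv hbp ⊢
  rw [← Ideal.jacobson_bot, Ideal.mem_jacobson_iff]
  intro y
  obtain ⟨n, hn⟩ : IsNilpotent (p * y * b) := by
    refine (hp.isNilpotent_or_exists_mul_eq hR (a := p * y * b) ?_ ?_).resolve_right ?_
    · rw [← mul_assoc, ← mul_assoc, hpp]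
    · rw [mul_assoc, hbp]
    · rintro ⟨v, hv⟩
      exact hinv ⟨v * (p * y), by rw [mul_assoc, hv]⟩
  have hpow (m : ℕ) : b * (p * y * b) ^ m = b * (y * b) ^ m := by
    induction m with
    | zero => simp
    | succ m ih =>
      rw [pow_succ', mul_assoc (p * y), ih, ← mul_assoc, ← mul_assoc b p, hbp, pow_succ', mul_assoc,
        mul_assoc y]
  have hnil : IsNilpotent (y * b) :=
    ⟨n + 1, by rw [pow_succ', mul_assoc, ← hpow, hn, mul_zero, mul_zero]⟩
  obtain ⟨z, hz⟩ := hnil.isUnit_one_add.exists_left_inv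
  exact ⟨z, by rw [Ideal.mem_bot, ← hz]; noncomm_ring⟩

theorem isIdempotentElem_sub {p g : R} (hp : IsIdempotentElem p) (hg : IsIdempotentElem g)
    (hpg : p * g = g) (hgp : g * p = g) : IsIdempotentElem (p - g) := by
  rw [IsIdempotentElem, mul_sub, sub_mul, sub_mul, hp.eq, hgp, hpg, hg.eq, sub_self, sub_zero]

theorem span_map_lt_span_map_of_isIdempotentElem {Q : Type*} [Ring Q] (φ : R →+* Q)
    (hφ : ∀ g, IsIdempotentElem g → φ g = 0 → g = 0) {p g : R} (hp : IsIdempotentElem p)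
    (hg : IsIdempotentElem g) (hpg : p * g = g) (hgp : g * p = g) (hne : g ≠ p) :
    Ideal.span {φ g} < Ideal.span {φ p} := by
  refine lt_of_le_of_ne ((Ideal.span_singleton_le_iff_mem _).2 ?_) fun heq ↦ hne ?_
  · exact Ideal.mem_span_singleton'.2 ⟨φ g, by rw [← map_mul, hgp]⟩
  · obtain ⟨x, hx⟩ := Ideal.mem_span_singleton'.1 (heq ▸ Ideal.mem_span_singleton_self (φ p))
    have hφpg : φ p = φ g := by
      calc φ p = x * φ (g * g) := by rw [hg.eq, hx]
        _ = φ (p * g) := by rw [map_mul, ← mul_assoc, hx, map_mul]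
        _ = φ g := by rw [hpg]
    have hsub : p - g = 0 :=
      hφ _ (isIdempotentElem_sub hp hg hpg hgp) (by rw [map_sub, hφpg, sub_self])
    exact (sub_eq_zero.1 hsub).symm

theorem mem_closure_isPrimitiveIdempotent {Q : Type*} [Ring Q] [IsArtinianRing Q] (φ : R →+* Q)
    (hφ : ∀ g, IsIdempotentElem g → φ g = 0 → g = 0) (p : R) (hp : IsIdempotentElem p) :
    p ∈ AddSubmonoid.closure {e : R | IsPrimitiveIdempotent e} := by
  induction hI : Ideal.span {φ p} using WellFoundedLT.induction generalizing p with
  | ind I ih =>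
  subst hI
  by_cases hprim : IsPrimitiveIdempotent p
  · exact AddSubmonoid.subset_closure hprim
  by_cases hp0 : p = 0
  · exact hp0 ▸ zero_mem _
  obtain ⟨g, hg, hpg, hgp, hg0, hgne⟩ :
      ∃ g, IsIdempotentElem g ∧ p * g = g ∧ g * p = g ∧ g ≠ 0 ∧ g ≠ p := by
    by_contra! h
    exact hprim ⟨hp, hp0, fun g hg hpg hgp ↦ or_iff_not_imp_left.2 (h g hg hpg hgp)⟩
  have hpg_idem : IsIdempotentElem (p - g) := isIdempotentElem_sub hp hg hpg hgp
  rw [← add_sub_cancel g p]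
  refine add_mem (ih _ ?_ g hg rfl) (ih _ ?_ (p - g) hpg_idem rfl)
  · exact span_map_lt_span_map_of_isIdempotentElem φ hφ hp hg hpg hgp hgne
  · exact span_map_lt_span_map_of_isIdempotentElem φ hφ hp hpg_idem (by rw [mul_sub, hp.eq, hpg])
      (by rw [sub_mul, hp.eq, hgp]) (by simpa using hg0)

end Idempotents

section LocalIdempotents

variable {A : Type*} [Ring A]

theorem isUnit_of_coeff_mem_jacobson
    (hJ : laurentIdeal (Ring.jacobson A) ≤ Ring.jacobson (LaurentSeries A)) {f : LaurentSeries A}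
    (hneg : ∀ k < 0, f.coeff k ∈ Ring.jacobson A) (h0 : IsUnit (f.coeff 0)) : IsUnit f := by
  have hmem : HahnSeries.truncLT 0 f ∈ Ring.jacobson (LaurentSeries A) := hJ fun k ↦ by
    obtain hk | hk := lt_or_ge k 0
    · rw [HahnSeries.coeff_truncLT_of_lt hk]
      exact hneg k hk
    · rw [HahnSeries.coeff_truncLT_of_le hk]
      exact zero_mem _
  have hunit : IsUnit (f - HahnSeries.truncLT 0 f) := isUnit_of_isUnit_coeff_zero
    (fun k hk ↦ by rw [HahnSeries.coeff_sub, HahnSeries.coeff_truncLT_of_lt hk, sub_self])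
    (by rwa [HahnSeries.coeff_sub, HahnSeries.coeff_truncLT_of_le le_rfl, sub_zero])
  refine isUnit_of_map_unit (Ideal.Quotient.mk (Ring.jacobson (LaurentSeries A))) f ?_
  rw [← sub_add_cancel f (HahnSeries.truncLT 0 f), map_add,
    (Ideal.Quotient.eq_zero_iff_mem).2 hmem, add_zero]
  exact hunit.map _

-- If `c = p * f.coeff j * p` is the first coefficient of `pfp` outside `J(A)` and `b * c = p`, then
-- `1 - p + b x⁻ʲ pfp` is a unit.
theorem IsLocalIdempotent.mem_laurentIdeal_or {p : A} (hp : IsLocalIdempotent p)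
    (hJ : laurentIdeal (Ring.jacobson A) ≤ Ring.jacobson (LaurentSeries A)) (f : LaurentSeries A) :
    HahnSeries.C p * f * HahnSeries.C p ∈ laurentIdeal (Ring.jacobson A) ∨
      ∃ v, v * (HahnSeries.C p * f * HahnSeries.C p) = HahnSeries.C p := by
  refine or_iff_not_imp_left.2 fun hf ↦ ?_
  have hpp : (HahnSeries.C p : LaurentSeries A) * HahnSeries.C p = HahnSeries.C p := by
    rw [← map_mul, hp.isIdempotentElem.eq]
  have hcoeff (k : ℤ) : (HahnSeries.C p * f * HahnSeries.C p).coeff k = p * f.coeff k * p := by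
    rw [laurent_coeff_mul_C, laurent_coeff_C_mul]
  obtain ⟨j, hj, hmin⟩ : ∃ j, p * f.coeff j * p ∉ Ring.jacobson A ∧
      ∀ k, p * f.coeff k * p ∉ Ring.jacobson A → j ≤ k := by
    refine Int.exists_least_of_bdd ⟨f.order, fun k hk ↦ ?_⟩ ?_
    · by_contra! hlt
      exact hk (by rw [HahnSeries.coeff_eq_zero_of_lt_order hlt]; simp)
    · by_contra! h
      exact hf fun k ↦ hcoeff k ▸ h k
  obtain ⟨b, hb⟩ := (hp.mem_jacobson_or _).resolve_left hj
  let u := HahnSeries.C b * HahnSeries.single (-j) 1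
  have hu (k : ℤ) : (u * (HahnSeries.C p * f * HahnSeries.C p)).coeff k =
      b * (p * f.coeff (k + j) * p) := by
    rw [mul_assoc, laurent_coeff_C_mul, HahnSeries.coeff_single_mul, one_mul, hcoeff,
      sub_neg_eq_add]
  have hunit : IsUnit (1 - HahnSeries.C p + u * (HahnSeries.C p * f * HahnSeries.C p)) := by
    refine isUnit_of_coeff_mem_jacobson hJ (fun k hk ↦ ?_) ?_
    · rw [HahnSeries.coeff_add, hu, HahnSeries.coeff_sub, HahnSeries.coeff_one, laurent_coeff_C,
        if_neg hk.ne, if_neg hk.ne, sub_zero, zero_add]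
      refine Ideal.mul_mem_left _ _ (not_imp_comm.1 (hmin _) (by lia))
    · rw [HahnSeries.coeff_add, hu, zero_add, hb, HahnSeries.coeff_sub, HahnSeries.coeff_one,
        laurent_coeff_C, if_pos rfl, if_pos rfl, sub_add_cancel]
      exact isUnit_one
  obtain ⟨w, hw⟩ := hunit.exists_left_inv
  refine ⟨w * u, ?_⟩
  calc w * u * (HahnSeries.C p * f * HahnSeries.C p)
      = w * (1 - HahnSeries.C p + u * (HahnSeries.C p * f * HahnSeries.C p)) * HahnSeries.C p := by
        simp only [mul_assoc, add_mul, sub_mul, one_mul, hpp, sub_self, zero_add]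
    _ = HahnSeries.C p := by rw [hw, one_mul]

theorem IsLocalIdempotent.map_C {p : A} (hp : IsLocalIdempotent p)
    (hJ : laurentIdeal (Ring.jacobson A) ≤ Ring.jacobson (LaurentSeries A)) :
    IsLocalIdempotent (HahnSeries.C p : LaurentSeries A) where
  isIdempotentElem := hp.isIdempotentElem.map HahnSeries.C
  ne_zero := (map_ne_zero_iff _ HahnSeries.C_injective).2 hp.ne_zero
  mem_jacobson_or f := (hp.mem_laurentIdeal_or hJ f).imp_left fun h ↦ hJ h

end LocalIdempotents

section Distributive

theorem IsDistribModule.exists_smul_mem_span {R M : Type*} [Ring R] [AddCommGroup M] [Module R M]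
    (hM : IsDistribModule R M) (m n : M) :
    ∃ r : R, r • m ∈ Submodule.span R {n} ∧ (1 - r) • n ∈ Submodule.span R {m} := by
  have hmem : m + n ∈ Submodule.span R {m + n} ⊓ (Submodule.span R {m} ⊔ Submodule.span R {n}) :=
    ⟨Submodule.mem_span_singleton_self _, Submodule.add_mem_sup
      (Submodule.mem_span_singleton_self m) (Submodule.mem_span_singleton_self n)⟩
  rw [hM] at hmem
  obtain ⟨y, ⟨-, hy⟩, z, ⟨hz, hzn⟩, hyz⟩ := Submodule.mem_sup.1 hmem
  obtain ⟨r, rfl⟩ := Submodule.mem_span_singleton.1 hz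
  refine ⟨r, ?_, ?_⟩
  · have : r • m = r • (m + n) - r • n := by rw [smul_add, add_sub_cancel_right]
    exact this ▸ sub_mem hzn (Submodule.smul_mem _ r (Submodule.mem_span_singleton_self n))
  · have : (1 - r) • n = y - (1 - r) • m := by
      rw [eq_sub_of_add_eq hyz, ← one_smul R (m + n), smul_smul, ← sub_smul, mul_one, smul_add,
        add_sub_cancel_left]
    exact this ▸ sub_mem hy (Submodule.smul_mem _ _ (Submodule.mem_span_singleton_self m))

variable {R : Type*} [Ring R]

theorem IsDistribModule.exists_dvd {N : Submodule Rᵐᵒᵖ R} (hN : IsDistribModule Rᵐᵒᵖ N) {m n : R}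
    (hm : m ∈ N) (hn : n ∈ N) : ∃ r, n ∣ m * r ∧ m ∣ n * (1 - r) := by
  obtain ⟨r, hmn, hnm⟩ := hN.exists_smul_mem_span ⟨m, hm⟩ ⟨n, hn⟩
  obtain ⟨s, hs⟩ := Submodule.mem_span_singleton.1 hmn
  obtain ⟨t, ht⟩ := Submodule.mem_span_singleton.1 hnm
  exact ⟨r.unop, ⟨s.unop, congr(($hs).1).symm⟩, ⟨t.unop, congr(($ht).1).symm⟩⟩

-- Since `1` is a sum of elements of the distributive summands, left multiplication by one of them
-- embeds `eR` into its summand.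
theorem IsRightSemidistributiveRing.exists_dvd (hR : IsRightSemidistributiveRing R) {e : R}
    (he : IsLocalIdempotent e) {m n : R} (hm : e * m = m) (hn : e * n = n) :
    ∃ r, n ∣ m * r ∧ m ∣ n * (1 - r) := by
  obtain ⟨ι, N, -, htop, hN⟩ := hR
  obtain ⟨f, hf, hsum⟩ := (Submodule.mem_iSup_iff_exists_finsupp N 1).1 (htop ▸ Submodule.mem_top)
  obtain ⟨i, hi⟩ : ∃ i, e * f i * e ∉ Ring.jacobson R := by
    by_contra! h
    refine he.ne_zero (idempotent_eq_zero_of_mem_jacobson he.isIdempotentElem ?_)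
    have : e = ∑ i ∈ f.support, e * f i * e := by
      rw [← Finset.sum_mul, ← Finset.mul_sum, show ∑ i ∈ f.support, f i = 1 from hsum, mul_one,
        he.isIdempotentElem]
    exact this ▸ sum_mem fun i _ ↦ h i
  obtain ⟨v, hv⟩ := (he.mem_jacobson_or _).resolve_left hi
  have hinv {y : R} (hy : e * y = y) : v * e * (f i * y) = y := by
    calc v * e * (f i * y) = v * e * (f i * (e * y)) := by rw [hy]
      _ = v * (e * f i * e) * y := by simp only [mul_assoc]
      _ = y := by rw [hv, hy]
  have hmem (y : R) : f i * y ∈ N i := (N i).smul_mem (MulOpposite.op y) (hf i)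
  obtain ⟨r, hnm, hmn⟩ := (hN i).exists_dvd (hmem m) (hmem n)
  rw [mul_assoc] at hnm hmn
  have hmr : e * (m * r) = m * r := by rw [← mul_assoc, hm]
  have hnr : e * (n * (1 - r)) = n * (1 - r) := by rw [← mul_assoc, hn]
  refine ⟨r, ?_, ?_⟩
  · simpa only [hinv hn, hinv hmr] using mul_dvd_mul_left (v * e) hnm
  · simpa only [hinv hm, hinv hnr] using mul_dvd_mul_left (v * e) hmn

theorem IsLocalIdempotent.mul_dvd {f : R} (hf : IsLocalIdempotent f) {a m : R}
    (ha : f * a * f ∉ Ring.jacobson R) (hm : m * f = m) : m * a ∣ m := by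
  calc m * a ∣ m * a * f := dvd_mul_right _ _
    _ = m * (f * a * f) := by simp only [← mul_assoc, hm]
    _ ∣ m * f := mul_dvd_mul_left _ (hf.corner_dvd ha)
    _ = m := hm

/-- The Peirce component `pRq` of `R`, for idempotents `p` and `q`. -/
def peirceComponent (p q : R) : Set R := {y | p * y = y ∧ y * q = y}

theorem IsRightSemidistributiveRing.dvd_or_dvd (hR : IsRightSemidistributiveRing R) {e f : R}
    (he : IsLocalIdempotent e) (hf : IsLocalIdempotent f) {m n : R} (hm : m ∈ peirceComponent e f)
    (hn : n ∈ peirceComponent e f) : m ∣ n ∨ n ∣ m := by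
  obtain ⟨r, hnm, hmn⟩ := hR.exists_dvd he hm.1 hn.1
  by_cases hr : f * r * f ∈ Ring.jacobson R
  · refine .inl (hmn.trans (hf.mul_dvd (fun h ↦ hf.ne_zero ?_) hn.2))
    refine idempotent_eq_zero_of_mem_jacobson hf.isIdempotentElem ?_
    have : f = f * r * f + f * (1 - r) * f := by
      rw [← add_mul, ← mul_add, add_sub_cancel, mul_one, hf.isIdempotentElem]
    exact this ▸ add_mem hr h
  · exact .inr (hnm.trans (hf.mul_dvd hr hm.2))

end Distributive

section Divisibility

theorem map_mem_peirceComponent {R S : Type*} [Ring R] [Ring S] (φ : R →+* S) {p q y : R}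
    (hy : y ∈ peirceComponent p q) : φ y ∈ peirceComponent (φ p) (φ q) :=
  ⟨by rw [← map_mul, hy.1], by rw [← map_mul, hy.2]⟩

variable {A : Type*} [Ring A]

theorem mem_peirceComponent_C_iff {p q : A} {f : LaurentSeries A} :
    f ∈ peirceComponent (HahnSeries.C p) (HahnSeries.C q) ↔
      ∀ k, f.coeff k ∈ peirceComponent p q := by
  simp only [peirceComponent, Set.mem_ofPred_eq, HahnSeries.ext_iff, funext_iff,
    laurent_coeff_C_mul, laurent_coeff_mul_C, forall_and]

theorem C_dvd_iff {a : A} {f : LaurentSeries A} : HahnSeries.C a ∣ f ↔ ∀ k, a ∣ f.coeff k := by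
  refine ⟨?_, fun h ↦ ?_⟩
  · rintro ⟨g, rfl⟩ k
    exact ⟨g.coeff k, laurent_coeff_C_mul a g k⟩
  · choose g hg using h
    refine ⟨⟨f.support.indicator g, f.isPWO_support.mono Set.support_indicator_subset⟩, ?_⟩
    ext k
    rw [laurent_coeff_C_mul]
    by_cases hk : f.coeff k = 0
    · simp [hk]
    · simpa [Set.indicator, hk] using hg k

theorem C_dvd_C_iff {a b : A} :
    (HahnSeries.C a : LaurentSeries A) ∣ HahnSeries.C b ↔ a ∣ b := by
  refine ⟨fun h ↦ ?_, map_dvd HahnSeries.C⟩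
  simpa [laurent_coeff_C] using C_dvd_iff.1 h 0

end Divisibility

section SparseSeries

variable {A : Type*} [Ring A]

/-- The series `∑ i, d i * x ^ (i ^ 2)`, whose gaps grow beyond any bound. -/
noncomputable def sparseSeries (d : ℕ → A) : LaurentSeries A :=
  HahnSeries.embDomain
    (OrderEmbedding.ofStrictMono (fun i : ℕ ↦ (i : ℤ) ^ 2) fun i j hij ↦ by
      dsimp only; gcongr)
    (HahnSeries.toPowerSeries.symm (PowerSeries.mk d))

theorem sparseSeries_coeff_sq (d : ℕ → A) (i : ℕ) : (sparseSeries d).coeff (i ^ 2) = d i :=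
  HahnSeries.embDomain_coeff.trans (PowerSeries.coeff_mk i d)

theorem exists_sq_of_sparseSeries_coeff_ne_zero {d : ℕ → A} {k : ℤ}
    (hk : (sparseSeries d).coeff k ≠ 0) : ∃ l : ℕ, k = l ^ 2 := by
  contrapose! hk
  refine HahnSeries.embDomain_of_notMem_range ?_
  rintro ⟨l, rfl⟩
  exact hk l rfl

-- The next exponent after `i ^ 2` exceeds it by `2 * i + 1`, too much for `s` to compensate.
theorem dvd_coeff_sparseSeries_mul {d : ℕ → A} {s : LaurentSeries A} {b : A} {i : ℕ}
    (hi : -s.order ≤ i) (hb : ∀ l ≤ i, b ∣ d l) : b ∣ (sparseSeries d * s).coeff (i ^ 2) := by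
  rw [HahnSeries.coeff_mul]
  refine Finset.dvd_sum fun ⟨j, k⟩ hjk ↦ ?_
  obtain ⟨hj, hk, hsum⟩ := Finset.mem_antidiagonal.1 hjk
  obtain ⟨l, rfl⟩ := exists_sq_of_sparseSeries_coeff_ne_zero hj
  refine Dvd.dvd.mul_right ?_ _
  rw [sparseSeries_coeff_sq]
  refine hb l (not_lt.1 fun hil ↦ hk (HahnSeries.coeff_eq_zero_of_lt_order ?_))
  have : (i : ℤ) + 1 ≤ l := by exact_mod_cast hil
  simp only at hsum ⊢
  nlinarith

theorem not_sparseSeries_indicator_compl_dvd {c : ℕ → A} (hdvd : ∀ i, c (i + 1) ∣ c i)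
    (hndvd : ∀ i, ¬ c i ∣ c (i + 1)) {S : Set ℕ} (hS : S.Infinite) :
    ¬ sparseSeries (Sᶜ.indicator c) ∣ sparseSeries (S.indicator c) := by
  rintro ⟨s, hs⟩
  obtain ⟨i, hiS, hi⟩ := hS.exists_gt s.order.natAbs
  obtain ⟨i, rfl⟩ := Nat.exists_eq_add_one.2 (Nat.zero_lt_of_lt hi)
  have hmono {l : ℕ} (hl : l ≤ i) : c i ∣ c l := Nat.le_induction (P := fun j _ ↦ c j ∣ c l)
    dvd_rfl (fun j _ h ↦ (hdvd j).trans h) i hl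
  have hcoeff : (sparseSeries (S.indicator c)).coeff ((i + 1 : ℕ) ^ 2) = c (i + 1) := by
    rw [sparseSeries_coeff_sq, Set.indicator_of_mem hiS]
  refine hndvd i (hcoeff ▸ hs ▸ dvd_coeff_sparseSeries_mul (by lia) fun l hl ↦ ?_)
  by_cases hlS : l ∈ S
  · rw [Set.indicator_of_notMem (by simpa using hlS)]
    exact dvd_zero _
  · rw [Set.indicator_of_mem hlS]
    exact hmono (by grind)

theorem sparseSeries_mem_peirceComponent {p q : A} {d : ℕ → A}
    (hd : ∀ i, d i ∈ peirceComponent p q) :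
    sparseSeries d ∈ peirceComponent (HahnSeries.C p) (HahnSeries.C q) := by
  refine mem_peirceComponent_C_iff.2 fun k ↦ ?_
  by_cases hk : (sparseSeries d).coeff k = 0
  · rw [hk]
    exact ⟨mul_zero p, zero_mul q⟩
  · obtain ⟨l, rfl⟩ := exists_sq_of_sparseSeries_coeff_ne_zero hk
    exact sparseSeries_coeff_sq d l ▸ hd l

variable {p q : A} (htotal : ∀ f ∈ peirceComponent (HahnSeries.C p : LaurentSeries A)
  (HahnSeries.C q), ∀ g ∈ peirceComponent (HahnSeries.C p) (HahnSeries.C q), f ∣ g ∨ g ∣ f)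

include htotal

theorem exists_dvd_succ_of_forall_succ_dvd {c : ℕ → A} (hc : ∀ i, c i ∈ peirceComponent p q)
    (hdvd : ∀ i, c (i + 1) ∣ c i) : ∃ i, c i ∣ c (i + 1) := by
  by_contra! hndvd
  have hmem (S : Set ℕ) : sparseSeries (S.indicator c) ∈
      peirceComponent (HahnSeries.C p) (HahnSeries.C q) := by
    refine sparseSeries_mem_peirceComponent fun i ↦ ?_
    by_cases hi : i ∈ S
    · exact Set.indicator_of_mem hi c ▸ hc i
    · exact Set.indicator_of_notMem hi c ▸ ⟨mul_zero p, zero_mul q⟩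
  have hcompl : {i : ℕ | Odd i}ᶜ = {i | Even i} := by ext; simp
  obtain h | h := htotal _ (hmem {i | Even i}) _ (hmem {i | Odd i})
  · refine not_sparseSeries_indicator_compl_dvd hdvd hndvd
      (Nat.frequently_atTop_iff_infinite.1 Nat.frequently_odd) (hcompl ▸ h)
  · refine not_sparseSeries_indicator_compl_dvd hdvd hndvd
      (Nat.frequently_atTop_iff_infinite.1 Nat.frequently_even) ?_
    rwa [← hcompl, compl_compl, hcompl]

theorem exists_mem_forall_dvd {Y : Set A} (hY : Y ⊆ peirceComponent p q) (hne : Y.Nonempty) :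
    ∃ c ∈ Y, ∀ y ∈ Y, c ∣ y := by
  let r (a b : Y) : Prop := (a : A) ∣ b ∧ ¬ (b : A) ∣ a
  have hwf : WellFounded r := by
    refine wellFounded_iff_isEmpty_descending_chain.2 ⟨?_⟩
    rintro ⟨c, hc⟩
    obtain ⟨i, hi⟩ := exists_dvd_succ_of_forall_succ_dvd htotal (fun i ↦ hY (c i).2)
      fun i ↦ (hc i).1
    exact (hc i).2 hi
  obtain ⟨c, -, hc⟩ := hwf.has_min Set.univ (@Set.univ_nonempty Y hne.to_subtype)
  refine ⟨c, c.2, fun y hy ↦ ?_⟩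
  have hcomp : c.1 ∣ y ∨ y ∣ c.1 := by
    rw [← C_dvd_C_iff, ← C_dvd_C_iff (a := y)]
    exact htotal _ (map_mem_peirceComponent _ (hY c.2)) _ (map_mem_peirceComponent _ (hY hy))
  refine hcomp.elim id fun hyc ↦ by_contra fun hcy ↦ ?_
  exact hc ⟨y, hy⟩ (Set.mem_univ _) ⟨hyc, hcy⟩

end SparseSeries

section FinitelyManyGenerators

variable {R : Type*} [Ring R]

theorem exists_mem_peirceComponent_eq_mul {q t y : R} (hq : IsIdempotentElem q) (ht : t * q = t)
    (hy : y * q = y) (hty : t ∣ y) : ∃ g ∈ peirceComponent q q, y = t * g := by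
  obtain ⟨s, rfl⟩ := hty
  refine ⟨q * s * q, ⟨by simp only [← mul_assoc, hq.eq], by rw [mul_assoc, hq.eq]⟩, ?_⟩
  rw [← mul_assoc, ← mul_assoc, ht, hy]

theorem exists_pow_mul_dvd_and_dvd {q w h : R} {K : ℕ} (hq : IsIdempotentElem q)
    (hw : w ∈ peirceComponent q q) (hK : w ^ K = 0)
    (hdvd : ∀ g ∈ peirceComponent q q, w ∣ g ∨ g ∣ q) (hh : h ∈ peirceComponent q q) :
    ∃ i ≤ K, w ^ i * q ∣ h ∧ h ∣ w ^ i * q := by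
  classical
  obtain ⟨i, hiK, hih, hmax⟩ : ∃ i ≤ K, w ^ i * q ∣ h ∧ (i < K → ¬ w ^ (i + 1) * q ∣ h) :=
    ⟨Nat.findGreatest (fun i ↦ w ^ i * q ∣ h) K, Nat.findGreatest_le K,
      Nat.findGreatest_spec (P := fun i ↦ w ^ i * q ∣ h) (Nat.zero_le K)
        (by rw [pow_zero, one_mul]; exact ⟨h, hh.1.symm⟩),
      Nat.findGreatest_is_greatest (Nat.lt_succ_self _)⟩
  refine ⟨i, hiK, hih, ?_⟩
  obtain rfl | hlt := hiK.eq_or_lt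
  · rw [hK, zero_mul]
    exact dvd_zero h
  obtain ⟨g, hg, hgh⟩ :=
    exists_mem_peirceComponent_eq_mul hq (by rw [mul_assoc, hq.eq]) hh.2 hih
  obtain ⟨s, rfl⟩ | hgq := hdvd g hg
  · have hsucc : w ^ (i + 1) * q ∣ h := by
      refine ⟨s, ?_⟩
      rw [hgh, pow_succ, mul_assoc (w ^ i) w q, hw.2, mul_assoc, ← mul_assoc q, hw.1, mul_assoc]
    exact absurd hsucc (hmax hlt)
  · calc h = w ^ i * q * g := hgh
      _ = w ^ i * g := by rw [mul_assoc, hg.1]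
      _ ∣ w ^ i * q := mul_dvd_mul_left _ hgq

theorem exists_mul_pow_mul_dvd_and_dvd {q w c y : R} {K : ℕ} (hq : IsIdempotentElem q)
    (hw : w ∈ peirceComponent q q) (hK : w ^ K = 0)
    (hdvd : ∀ g ∈ peirceComponent q q, w ∣ g ∨ g ∣ q) (hc : c * q = c) (hy : y * q = y)
    (hcy : c ∣ y) : ∃ i ≤ K, c * (w ^ i * q) ∣ y ∧ y ∣ c * (w ^ i * q) := by
  obtain ⟨g, hg, rfl⟩ := exists_mem_peirceComponent_eq_mul hq hc hy hcy
  obtain ⟨i, hiK, hig, hgi⟩ := exists_pow_mul_dvd_and_dvd hq hw hK hdvd hg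
  exact ⟨i, hiK, mul_dvd_mul_left c hig, mul_dvd_mul_left c hgi⟩

variable {A : Type*} [Ring A]

theorem IsLocalIdempotent.C_dvd_or_dvd_C {q w : A} (hq : IsLocalIdempotent q)
    (hJ : laurentIdeal (Ring.jacobson A) ≤ Ring.jacobson (LaurentSeries A))
    (hw : ∀ a ∈ peirceComponent q q, a ∈ Ring.jacobson A → w ∣ a) {g : LaurentSeries A}
    (hg : g ∈ peirceComponent (HahnSeries.C q) (HahnSeries.C q)) :
    HahnSeries.C w ∣ g ∨ g ∣ HahnSeries.C q := by
  have hqg : HahnSeries.C q * g * HahnSeries.C q = g := by rw [hg.1, hg.2]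
  have hCq := hq.map_C hJ
  obtain h | ⟨v, hv⟩ := hq.mem_laurentIdeal_or hJ g
  · rw [hqg] at h
    exact .inl (C_dvd_iff.2 fun k ↦ hw _ (mem_peirceComponent_C_iff.1 hg k) (h k))
  · refine .inr (hqg ▸ hCq.corner_dvd fun hgJ ↦ hCq.ne_zero ?_)
    exact idempotent_eq_zero_of_mem_jacobson hCq.isIdempotentElem
      (hv ▸ Ideal.mul_mem_left _ v hgJ)

theorem exists_finite_forall_mem_peirceComponent_dvd_and_dvd
    (hR : IsRightSemidistributiveRing (LaurentSeries A))
    (hJ : laurentIdeal (Ring.jacobson A) ≤ Ring.jacobson (LaurentSeries A))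
    (hnil : ∀ a ∈ Ring.jacobson A, IsNilpotent a) {p q : A} (hp : IsLocalIdempotent p)
    (hq : IsLocalIdempotent q) :
    ∃ T : Set A, T.Finite ∧
      ∀ y ∈ peirceComponent (HahnSeries.C p : LaurentSeries A) (HahnSeries.C q),
        ∃ t ∈ T, HahnSeries.C t ∣ y ∧ y ∣ HahnSeries.C t := by
  have htotal {e : A} (he : IsLocalIdempotent e) (f : LaurentSeries A)
      (hf : f ∈ peirceComponent (HahnSeries.C e) (HahnSeries.C q)) (g : LaurentSeries A)
      (hg : g ∈ peirceComponent (HahnSeries.C e) (HahnSeries.C q)) : f ∣ g ∨ g ∣ f :=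
    hR.dvd_or_dvd (he.map_C hJ) (hq.map_C hJ) hf hg
  obtain ⟨c, hc, hc_dvd⟩ := exists_mem_forall_dvd (htotal hp) (Y := peirceComponent p q) subset_rfl
    ⟨0, mul_zero p, zero_mul q⟩
  obtain ⟨w, ⟨hw, hwJ⟩, hw_dvd⟩ := exists_mem_forall_dvd (htotal hq)
    (Y := peirceComponent q q ∩ Ring.jacobson A) Set.inter_subset_left
    ⟨0, ⟨mul_zero q, zero_mul q⟩, zero_mem _⟩
  obtain ⟨K, hK⟩ := hnil w hwJ
  refine ⟨(fun i ↦ c * (w ^ i * q)) '' Set.Iic K, (Set.finite_Iic K).image _, fun y hy ↦ ?_⟩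
  have hcq : (HahnSeries.C c * HahnSeries.C q : LaurentSeries A) = HahnSeries.C c := by
    rw [← map_mul, hc.2]
  have hwK : (HahnSeries.C w : LaurentSeries A) ^ K = 0 := by rw [← map_pow, hK, map_zero]
  have hcy : HahnSeries.C c ∣ y :=
    C_dvd_iff.2 fun k ↦ hc_dvd _ (mem_peirceComponent_C_iff.1 hy k)
  have hdvd (g : LaurentSeries A) (hg : g ∈ peirceComponent (HahnSeries.C q) (HahnSeries.C q)) :
      HahnSeries.C w ∣ g ∨ g ∣ HahnSeries.C q :=
    hq.C_dvd_or_dvd_C hJ (fun a ha haJ ↦ hw_dvd a ⟨ha, haJ⟩) hg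
  have hCq : IsIdempotentElem (HahnSeries.C q : LaurentSeries A) := (hq.map_C hJ).isIdempotentElem
  obtain ⟨i, hiK, hi⟩ := exists_mul_pow_mul_dvd_and_dvd hCq
    (map_mem_peirceComponent _ hw) hwK hdvd hcq hy.2 hcy
  refine ⟨_, ⟨i, hiK, rfl⟩, ?_⟩
  simpa only [map_mul, map_pow] using hi

end FinitelyManyGenerators

section Artinian

theorem isArtinian_of_forall_le_span_inter {R M : Type*} [Ring R] [AddCommGroup M] [Module R M]
    {N : Submodule R M} {T : Set M} (hT : T.Finite)
    (hN : ∀ X ≤ N, X ≤ Submodule.span R (X ∩ T)) : IsArtinian R N := by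
  have : Finite (𝒫 T) := hT.powerset
  have hinj : Function.Injective fun X : Submodule R N ↦
      (⟨X.map N.subtype ∩ T, Set.inter_subset_right⟩ : 𝒫 T) := fun X Y hXY ↦ by
    have hle (X : Submodule R N) := hN _ (Submodule.map_subtype_le N X)
    have hXY : (X.map N.subtype ∩ T : Set M) = (Y.map N.subtype ∩ T : Set M) := congr(($hXY).1)
    refine Submodule.map_injective_of_injective N.injective_subtype (le_antisymm ?_ ?_)
    · exact (hXY ▸ hle X).trans (Submodule.span_le.2 Set.inter_subset_left)
    · exact (hXY ▸ hle Y).trans (Submodule.span_le.2 Set.inter_subset_left)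
  have := Finite.of_injective _ hinj
  exact (inferInstance : WellFoundedLT (Submodule R N))

theorem isArtinian_of_one_mem_closure {R : Type*} [Ring R] {E : Set R}
    (hone : 1 ∈ AddSubmonoid.closure E) (hidem : ∀ p ∈ E, IsIdempotentElem p)
    (hfin : ∀ p ∈ E, ∀ q ∈ E, ∃ T : Set R, T.Finite ∧
      ∀ y ∈ peirceComponent p q, ∃ t ∈ T, t ∣ y ∧ y ∣ t) : IsArtinian Rᵐᵒᵖ R := by
  obtain ⟨s, hsE, hs⟩ := AddSubmonoid.exists_list_of_mem_closure hone
  have : Finite {p // p ∈ s} := s.finite_toSet.to_subtype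
  have mul_mem {X : Submodule Rᵐᵒᵖ R} {x y : R} (hx : x ∈ X) (h : x ∣ y) : y ∈ X := by
    obtain ⟨r, rfl⟩ := h
    exact X.smul_mem (MulOpposite.op r) hx
  have isArtinian_span (p : {p // p ∈ s}) : IsArtinian Rᵐᵒᵖ (Submodule.span Rᵐᵒᵖ {p.1}) := by
    have hp := hsE p p.2
    choose T hT hTdvd using fun q : {q // q ∈ s} ↦ hfin p hp q (hsE q q.2)
    refine isArtinian_of_forall_le_span_inter (Set.finite_iUnion hT) fun X hX y hy ↦ ?_
    obtain ⟨r, hr⟩ := Submodule.mem_span_singleton.1 (hX hy)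
    have hpy : p * y = y := by
      rw [← hr, MulOpposite.smul_eq_mul_unop, ← mul_assoc, (hidem p hp).eq]
    have hsum : (s.map (y * ·)).sum = y := by
      rw [List.sum_map_mul_left, List.map_id', hs, mul_one]
    refine hsum ▸ list_sum_mem fun z hz ↦ ?_
    obtain ⟨q, hq, rfl⟩ := List.mem_map.1 hz
    obtain ⟨t, ht, hty, hyt⟩ := hTdvd ⟨q, hq⟩ (y * q)
      ⟨by rw [← mul_assoc, hpy], by rw [mul_assoc, (hidem q (hsE q hq)).eq]⟩
    have htX : t ∈ X := mul_mem hy ((dvd_mul_right y q).trans hyt)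
    exact mul_mem (Submodule.subset_span ⟨htX, Set.mem_iUnion.2 ⟨_, ht⟩⟩) hty
  have htop : ⨆ p : {p // p ∈ s}, Submodule.span Rᵐᵒᵖ {p.1} = ⊤ := by
    refine eq_top_iff.2 fun y _ ↦ mul_mem (x := 1) (hs ▸ list_sum_mem fun p hp ↦ ?_) (one_dvd y)
    exact Submodule.mem_iSup_of_mem ⟨p, hp⟩ (Submodule.mem_span_singleton_self p)
  have : IsArtinian Rᵐᵒᵖ (⊤ : Submodule Rᵐᵒᵖ R) := htop ▸ isArtinian_iSup
  exact isArtinian_of_linearEquiv Submodule.topEquiv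

end Artinian

section LaurentArtinian

variable {A : Type*} [Ring A]

theorem IsSemilocalRing.one_mem_closure_isLocalIdempotent
    (hR : IsSemilocalRing (LaurentSeries A)) :
    (1 : A) ∈ AddSubmonoid.closure {p | IsLocalIdempotent p} := by
  have := hR.isSemisimpleRing
  let φ := (Ideal.Quotient.mk (Ring.jacobson (LaurentSeries A))).comp HahnSeries.C
  have hφ (g : A) (hg : IsIdempotentElem g) (h0 : φ g = 0) : g = 0 :=
    (map_eq_zero_iff HahnSeries.C HahnSeries.C_injective).1 <|
      idempotent_eq_zero_of_mem_jacobson (hg.map HahnSeries.C) (Ideal.Quotient.eq_zero_iff_mem.1 h0)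
  exact AddSubmonoid.closure_mono (fun p hp ↦ hp.isLocalIdempotent hR.isStronglyPiRegular)
    (mem_closure_isPrimitiveIdempotent φ hφ 1 .one)

end LaurentArtinian

/-- Let `R = A((x))` be the Laurent series ring over `A`. If `R` is a right
semidistributive semilocal ring, then both `R` and `A` are right Artinian rings. -/
theorem stmt12 (A : Type*) [Ring A]
    (hsd : IsRightSemidistributiveRing (LaurentSeries A))
    (hsl : IsSemilocalRing (LaurentSeries A)) :
    IsArtinian (LaurentSeries A)ᵐᵒᵖ (LaurentSeries A) ∧ IsArtinian Aᵐᵒᵖ A := by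
  have hnil (a : A) (ha : a ∈ Ring.jacobson A) : IsNilpotent a :=
    hsl.isStronglyPiRegular.isNilpotent_of_mem_jacobson ha
  have hJ := laurentIdeal_le_jacobson hsl hnil
  have hone := hsl.one_mem_closure_isLocalIdempotent
  have hfin {p q : A} (hp : IsLocalIdempotent p) (hq : IsLocalIdempotent q) :=
    exists_finite_forall_mem_peirceComponent_dvd_and_dvd hsd hJ hnil hp hq
  refine ⟨isArtinian_of_one_mem_closure (E := HahnSeries.C '' {p | IsLocalIdempotent p}) ?_ ?_ ?_,
    isArtinian_of_one_mem_closure hone (fun p hp ↦ hp.isIdempotentElem) fun p hp q hq ↦ ?_⟩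
  · rw [← HahnSeries.C_one, ← AddMonoidHom.map_mclosure]
    exact AddSubmonoid.mem_map_of_mem _ hone
  · rintro _ ⟨p, hp, rfl⟩
    exact (hp.map_C hJ).isIdempotentElem
  · rintro _ ⟨p, hp, rfl⟩ _ ⟨q, hq, rfl⟩
    obtain ⟨T, hT, h⟩ := hfin hp hq
    refine ⟨HahnSeries.C '' T, hT.image _, fun y hy ↦ ?_⟩
    obtain ⟨t, ht, hty⟩ := h y hy
    exact ⟨_, ⟨t, ht, rfl⟩, hty⟩
  · obtain ⟨T, hT, h⟩ := hfin hp hq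
    refine ⟨T, hT, fun y hy ↦ ?_⟩
    obtain ⟨t, ht, hty, hyt⟩ := h _ (map_mem_peirceComponent _ hy)
    exact ⟨t, ht, C_dvd_C_iff.1 hty, C_dvd_C_iff.1 hyt⟩
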